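/- Let t be a binary tree with n leaves, a ∈ ℕ^n a degree vector, and A an inner vertex of t whose descendant leaves are exactly those in positions i+1,…,i+j (for some i ≥ 0 and j ≥ 2). Then: (i) W_A = i + a_1 + ⋯ + a_i + b_A; and (ii) P(t, a) = P(t↑A, (a_{i+1},…,a_{i+j})) + P(t↓A, (a_1,…,a_i, δ, a_{i+j+1},…,a_n)) + b_A, where δ = a_{i+1} + ⋯ + a_{i+j} + j − 2, t↑A is the subtree of t rooted at A, and t↓A is t with this subtree replaced by a single leaf. -/

import Mathlib

/-- Planar rooted trees with leaves decorated by natural numbers (the degrees of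
the decorations). -/
inductive DTree : Type
  | leaf (a : ℕ) : DTree
  | node (children : List DTree) : DTree

namespace DTree

mutual
  /-- degree: sum of the leaf decorations plus the number of vertices. -/
  def deg : DTree → ℕ
    | leaf a => a
    | node cs => 1 + degList cs
  def degList : List DTree → ℕ
    | [] => 0
    | c :: rest => deg c + degList rest
end

mutual
  /-- `P(t,a)`: the sum, over all vertices `V` of `t` (root included), of the
  degrees of the decorated left (= first-child) subtrees of `V`. -/
  def Pval : DTree → ℕ
    | leaf _ => 0
    | node [] => 0
    | node (c :: rest) => deg c + Pval c + PvalList rest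
  def PvalList : List DTree → ℕ
    | [] => 0
    | c :: rest => Pval c + PvalList rest
end

mutual
  /-- the list of leaf decorations, in planar (left-to-right) order. -/
  def leafLabels : DTree → List ℕ
    | leaf a => [a]
    | node cs => leafLabelsList cs
  def leafLabelsList : List DTree → List ℕ
    | [] => []
    | c :: rest => leafLabels c ++ leafLabelsList rest
end

/-- binary trees: every vertex has exactly two children. -/
inductive IsBinary : DTree → Prop
  | leaf (a : ℕ) : IsBinary (leaf a)
  | node (t₁ t₂ : DTree) : IsBinary t₁ → IsBinary t₂ → IsBinary (node [t₁, t₂])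

/-- the subtree `t↑A` at address `p` (list of child indices from the root). -/
def subAt : DTree → List ℕ → DTree
  | t, [] => t
  | leaf a, _ :: _ => leaf a
  | node cs, i :: p => subAt (cs.getD i (leaf 0)) p

/-- validity of an address. -/
def ValidAddr : DTree → List ℕ → Prop
  | _, [] => True
  | leaf _, _ :: _ => False
  | node cs, i :: p => i < cs.length ∧ ValidAddr (cs.getD i (leaf 0)) p

/-- `t↓A` (with a prescribed replacement): replace the subtree at address `p`
by the tree `r` (below, `r` will be a single decorated leaf). -/
def replaceAt : DTree → List ℕ → DTree → DTree
  | _, [], r => r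
  | leaf a, _ :: _, _ => leaf a
  | node cs, i :: p, r => node (cs.set i (replaceAt (cs.getD i (leaf 0)) p r))

/-- The weight `W_A` of the vertex at address `p`: the number of edges of the
path `γ` from the root to `A` plus the sum of the degrees of the subtrees
hanging off the path to the left of it. -/
def weightAt : DTree → List ℕ → ℕ
  | _, [] => 0
  | leaf _, _ :: _ => 0
  | node cs, i :: p => 1 + ((cs.take i).map deg).sum + weightAt (cs.getD i (leaf 0)) p

/-- the number of leaves of `t` strictly to the left of the subtree at
address `p`. -/
def leavesBefore : DTree → List ℕ → ℕ
  | _, [] => 0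
  | leaf _, _ :: _ => 0
  | node cs, i :: p =>
      ((cs.take i).map fun c => (leafLabels c).length).sum +
        leavesBefore (cs.getD i (leaf 0)) p

end DTree

/-!
A binary tree has one vertex fewer than it has leaves, so the degree of a decorated binary tree is
the sum of its labels plus its number of leaves, minus one. Along the path to `A`, a right turn adds
to `W_A` one edge and the degree of a left subtree, that is, exactly the labels and the number of
the leaves of that subtree; a left turn adds one edge, counted by `b_A`. This is (i).

For (ii), replace the subtree at `A` in an arbitrary planar tree: the degree of a subtree containing
`A` changes by the difference of the degrees of the old and the new subtree at `A`, and `P` sees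
this change once for every left turn, hence `b_A` times. The label `δ` makes the difference one.
-/

theorem sum_map_set_add_getElem {α M : Type*} [AddCommMonoid M] (f : α → M) (x : α) :
    ∀ (l : List α) (i : ℕ) (hi : i < l.length),
      ((l.set i x).map f).sum + f l[i] = (l.map f).sum + f x
  | y :: l, 0, _ => by
    simp only [List.set_cons_zero, List.map_cons, List.sum_cons, List.getElem_cons_zero]
    abel
  | y :: l, i + 1, hi => by
    simp only [List.set_cons_succ, List.map_cons, List.sum_cons, List.getElem_cons_succ, add_assoc,
      sum_map_set_add_getElem f x l i (Nat.lt_of_succ_lt_succ hi)]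

namespace DTree

theorem degList_eq_sum_map (cs : List DTree) : degList cs = (cs.map deg).sum := by
  induction cs with
  | nil => rfl
  | cons c cs ih => rw [degList, ih, List.map_cons, List.sum_cons]

theorem PvalList_eq_sum_map (cs : List DTree) : PvalList cs = (cs.map Pval).sum := by
  induction cs with
  | nil => rfl
  | cons c cs ih => rw [PvalList, ih, List.map_cons, List.sum_cons]

theorem leafLabelsList_eq_flatMap (cs : List DTree) :
    leafLabelsList cs = cs.flatMap leafLabels := by
  induction cs with
  | nil => rfl
  | cons c cs ih => rw [leafLabelsList, ih, List.flatMap_cons]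

@[elab_as_elim]
theorem ValidAddr.induction {motive : ∀ (t : DTree) (p : List ℕ), ValidAddr t p → Prop}
    (nil : ∀ (t : DTree) (h : ValidAddr t []), motive t [] h)
    (cons : ∀ (cs : List DTree) (i : ℕ) (p : List ℕ) (h : ValidAddr (node cs) (i :: p))
      (hi : i < cs.length) (hp : ValidAddr cs[i] p), motive cs[i] p hp →
        motive (node cs) (i :: p) h) :
    ∀ {t : DTree} {p : List ℕ} (h : ValidAddr t p), motive t p h
  | t, [], h => nil t h
  | node cs, i :: p, h => by
    have ⟨hi, hp⟩ := h
    rw [List.getD_eq_getElem cs _ hi] at hp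
    exact cons cs i p h hi hp (ValidAddr.induction nil cons hp)

section NodeCons

variable {cs : List DTree} {i : ℕ} (hi : i < cs.length) (p : List ℕ)

theorem subAt_node_cons : subAt (node cs) (i :: p) = subAt cs[i] p := by
  rw [subAt, List.getD_eq_getElem cs _ hi]

theorem replaceAt_node_cons (r : DTree) :
    replaceAt (node cs) (i :: p) r = node (cs.set i (replaceAt cs[i] p r)) := by
  rw [replaceAt, List.getD_eq_getElem cs _ hi]

theorem weightAt_node_cons :
    weightAt (node cs) (i :: p) = 1 + ((cs.take i).map deg).sum + weightAt cs[i] p := by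
  rw [weightAt, List.getD_eq_getElem cs _ hi]

theorem leavesBefore_node_cons :
    leavesBefore (node cs) (i :: p) =
      ((cs.take i).flatMap leafLabels).length + leavesBefore cs[i] p := by
  rw [leavesBefore, List.getD_eq_getElem cs _ hi, List.length_flatMap]

end NodeCons

theorem deg_node_set_add_deg (r : DTree) {cs : List DTree} {i : ℕ} (hi : i < cs.length) :
    deg (node (cs.set i r)) + deg cs[i] = deg (node cs) + deg r := by
  simp only [deg, degList_eq_sum_map, add_assoc, sum_map_set_add_getElem deg r cs i hi]

theorem deg_replaceAt_add_deg_subAt {t : DTree} {p : List ℕ} (hp : ValidAddr t p) (r : DTree) :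
    deg (replaceAt t p r) + deg (subAt t p) = deg t + deg r := by
  induction hp using ValidAddr.induction with
  | nil t => exact add_comm _ _
  | cons cs i p _ hi _ ih =>
    rw [replaceAt_node_cons hi, subAt_node_cons hi]
    have hset := deg_node_set_add_deg (replaceAt cs[i] p r) hi
    omega

theorem Pval_node_set_zero (r c : DTree) (cs : List DTree) :
    Pval (node ((c :: cs).set 0 r)) + (deg c + Pval c) =
      Pval (node (c :: cs)) + (deg r + Pval r) := by
  simp only [List.set_cons_zero, Pval]
  ring

theorem Pval_node_set_succ (r c : DTree) {cs : List DTree} {i : ℕ} (hi : i < cs.length) :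
    Pval (node ((c :: cs).set (i + 1) r)) + Pval cs[i] = Pval (node (c :: cs)) + Pval r := by
  simp only [List.set_cons_succ, Pval, PvalList_eq_sum_map, add_assoc,
    sum_map_set_add_getElem Pval r cs i hi]

/-- The difference `P(t) - P(t↑A) - b_A * |t↑A|` does not depend on the subtree at `A`; both sides
are moved so that no truncated subtraction occurs. -/
theorem Pval_replaceAt_add {t : DTree} {p : List ℕ} (hp : ValidAddr t p) (r : DTree) :
    Pval (replaceAt t p r) + (Pval (subAt t p) + p.count 0 * deg (subAt t p)) =
      Pval t + (Pval r + p.count 0 * deg r) := by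
  induction hp using ValidAddr.induction with
  | nil t => simp only [replaceAt, subAt, List.count_nil]; ring
  | cons cs i p _ hi hp ih =>
    rw [replaceAt_node_cons hi, subAt_node_cons hi]
    match cs, i, hi with
    | c :: cs, 0, _ =>
      have hdeg : deg (replaceAt c p r) + deg (subAt c p) = deg c + deg r :=
        deg_replaceAt_add_deg_subAt hp r
      have hset := Pval_node_set_zero (replaceAt c p r) c cs
      rw [List.getElem_cons_zero] at ih ⊢
      rw [List.count_cons_self]
      linarith
    | c :: cs, i + 1, hi =>
      have hi' : i < cs.length := Nat.lt_of_succ_lt_succ hi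
      have hset := Pval_node_set_succ (replaceAt cs[i] p r) c hi'
      rw [List.getElem_cons_succ] at ih ⊢
      rw [List.count_cons_of_ne i.succ_ne_zero]
      linarith

theorem Pval_eq_add_replaceAt_leaf {t : DTree} {p : List ℕ} (hp : ValidAddr t p) {d : ℕ}
    (hd : deg (subAt t p) = d + 1) :
    Pval t = Pval (subAt t p) + Pval (replaceAt t p (leaf d)) + p.count 0 := by
  have h := Pval_replaceAt_add hp (leaf d)
  rw [hd] at h
  simp only [Pval, deg] at h
  linarith

theorem leafLabels_node_eq_append {cs : List DTree} {i : ℕ} (hi : i < cs.length) :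
    leafLabels (node cs) =
      (cs.take i).flatMap leafLabels ++
        (leafLabels cs[i] ++ (cs.drop (i + 1)).flatMap leafLabels) := by
  rw [← List.flatMap_cons, ← List.flatMap_append, ← List.drop_eq_getElem_cons hi,
    List.take_append_drop, leafLabels, leafLabelsList_eq_flatMap]

theorem leavesBefore_le_length_leafLabels {t : DTree} {p : List ℕ} (hp : ValidAddr t p) :
    leavesBefore t p ≤ (leafLabels t).length := by
  induction hp using ValidAddr.induction with
  | nil t => exact Nat.zero_le _
  | cons cs i p _ hi _ ih =>
    rw [leavesBefore_node_cons hi, leafLabels_node_eq_append hi, List.length_append,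
      List.length_append]
    omega

theorem take_leavesBefore_leafLabels_node_cons {cs : List DTree} {i : ℕ} {p : List ℕ}
    (hi : i < cs.length) (hp : ValidAddr cs[i] p) :
    (leafLabels (node cs)).take (leavesBefore (node cs) (i :: p)) =
      (cs.take i).flatMap leafLabels ++ (leafLabels cs[i]).take (leavesBefore cs[i] p) := by
  rw [leavesBefore_node_cons hi, leafLabels_node_eq_append hi, List.take_length_add_append,
    List.take_append_of_le_length (leavesBefore_le_length_leafLabels hp)]

namespace IsBinary

theorem of_mem_children {cs : List DTree} (h : IsBinary (DTree.node cs)) {c : DTree}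
    (hc : c ∈ cs) : IsBinary c := by
  cases h with
  | node t₁ t₂ h₁ h₂ =>
    rcases List.mem_pair.mp hc with rfl | rfl
    exacts [h₁, h₂]

theorem subAt {t : DTree} {p : List ℕ} (ht : IsBinary t) (hp : ValidAddr t p) :
    IsBinary (DTree.subAt t p) := by
  induction hp using ValidAddr.induction with
  | nil t => exact ht
  | cons cs i p _ hi _ ih =>
    rw [subAt_node_cons hi]
    exact ih (ht.of_mem_children (List.getElem_mem hi))

theorem deg_add_one {t : DTree} (ht : IsBinary t) :
    deg t + 1 = (leafLabels t).sum + (leafLabels t).length := by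
  induction ht with
  | leaf a => simp only [deg, leafLabels, List.sum_singleton, List.length_singleton]
  | node t₁ t₂ _ _ ih₁ ih₂ =>
    simp only [deg, degList, leafLabels, leafLabelsList, List.append_nil, List.sum_append,
      List.length_append]
    omega

theorem weightAt_eq {t : DTree} {p : List ℕ} (ht : IsBinary t) (hp : ValidAddr t p) :
    weightAt t p =
      leavesBefore t p + ((leafLabels t).take (leavesBefore t p)).sum + p.count 0 := by
  induction hp using ValidAddr.induction with
  | nil t => rfl
  | cons cs i p _ hi hp ih =>
    have ih := ih (ht.of_mem_children (List.getElem_mem hi))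
    rw [take_leavesBefore_leafLabels_node_cons hi hp, weightAt_node_cons hi,
      leavesBefore_node_cons hi, ih, List.sum_append]
    cases ht with
    | node t₁ t₂ h₁ _ =>
      match i, hi with
      | 0, _ =>
        simp only [List.take_zero, List.map_nil, List.flatMap_nil, List.sum_nil, List.length_nil,
          List.count_cons_self]
        omega
      | 1, _ =>
        have hdeg := h₁.deg_add_one
        simp only [List.take_succ_cons, List.take_zero, List.map_singleton, List.sum_singleton,
          List.flatMap_singleton, List.count_cons_of_ne one_ne_zero]
        omega

end IsBinary

end DTree

/-- the weight-and-sign Lemma of Appendix A.  Let `t` be a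
binary decorated tree and `A` an inner vertex of `t`, given by a nonempty valid
address `p` pointing to a node; let `i` be the number of leaves of `t` to the
left of `A`, `j` the number of leaves descending from `A` (so the descendant
leaves of `A` are exactly those in positions `i+1, …, i+j`), `δ = a_{i+1}+⋯+a_{i+j}+j−2`
the degree of the decorated subtree at `A` minus one, and `b_A` the number of
vertices `B` of `t` such that `A` is a vertex of the left subtree of `B`
(for a binary tree with a valid address, this is the number of left turns of
the path, i.e. the number of `0`s in `p`).  Then
(i)  `W_A = i + a_1 + ⋯ + a_i + b_A`, and
(ii) `P(t,a) = P(t↑A) + P(t↓A with new leaf δ) + b_A`. -/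
theorem stmt_16 (t : DTree) (ht : DTree.IsBinary t) (p : List ℕ) (hp : p ≠ [])
    (hv : DTree.ValidAddr t p) (ds : List DTree)
    (hnode : DTree.subAt t p = DTree.node ds) :
    DTree.weightAt t p =
      DTree.leavesBefore t p +
        ((DTree.leafLabels t).take (DTree.leavesBefore t p)).sum + p.count 0 ∧
    DTree.Pval t =
      DTree.Pval (DTree.subAt t p) +
        DTree.Pval (DTree.replaceAt t p (DTree.leaf
          ((DTree.leafLabels (DTree.subAt t p)).sum +
            (DTree.leafLabels (DTree.subAt t p)).length - 2))) + p.count 0 := by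
  refine ⟨ht.weightAt_eq hv, DTree.Pval_eq_add_replaceAt_leaf hv ?_⟩
  have hdeg := (ht.subAt hv).deg_add_one
  have hpos : 0 < DTree.deg (DTree.subAt t p) := by
    rw [hnode, DTree.deg]
    exact Nat.add_pos_left one_pos _
  omega
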